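/- For all s ∈ (-1, 1), the surface integral over the spherical cap M_s = {z ∈ ∂B₁ ⊂ ℝⁿ : zₙ > -s} of (zₙ + s)(zₙ² - z₁²) with respect to (n-1)-dimensional Hausdorff measure is strictly positive; moreover, for s ≥ 1 this integral vanishes, and for s ≤ -1 the domain of integration is empty. -/

import Mathlib

open MeasureTheory

/-!
The coordinates `z₁` and `zₙ` may be replaced by `b = ⟪u, z⟫` and `a = ⟪v, z⟫` for any two
non-parallel unit vectors `u`, `v`. The integral over the cap is that of `max (a + s) 0 * (a² - b²)`
over the sphere. Averaging over `z ↦ -z` and over the reflection exchanging `u` and `v`, and using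
`max (a + s) 0 + max (-a + s) 0 = max |a| |s| + s`, four times the integral becomes the integral
over the sphere of `(max |a| |s| - max |b| |s|) * (a² - b²)`. The two factors never have opposite
signs, so this is nonnegative; at `z = v` it is positive when `|s| < 1`, while it vanishes
identically on the sphere when `1 ≤ |s|`.

Near each of its points `v` the sphere is a Lipschitz graph over `vᗮ`, so its Hausdorff measure is
finite; the inverse chart is an orthogonal projection, which does not increase Hausdorff measure, so
nonempty relatively open subsets have positive measure.
-/

open Metric Module Set Submodule Topology

open scoped RealInnerProductSpace

section HemisphereGraph

variable {E : Type*} [NormedAddCommGroup E] [InnerProductSpace ℝ E] {v : E}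

/-- The parametrization of the hemisphere of the unit sphere around the unit vector `v` as a graph
over the hyperplane orthogonal to `v`; only its values on the closed unit ball are meaningful. -/
noncomputable def hemisphereGraph (v : E) (x : (ℝ ∙ v)ᗮ) : E :=
  √(1 - ‖x‖ ^ 2) • v + x

lemma hemisphereGraph_zero (v : E) : hemisphereGraph v 0 = v := by
  simp [hemisphereGraph]

lemma continuous_hemisphereGraph (v : E) : Continuous (hemisphereGraph v) := by
  unfold hemisphereGraph
  fun_prop

lemma contDiffAt_hemisphereGraph_zero {n : WithTop ℕ∞} (v : E) :
    ContDiffAt ℝ n (hemisphereGraph v) 0 := by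
  have hsqrt : ContDiffAt ℝ n (fun x : (ℝ ∙ v)ᗮ ↦ √(1 - ‖x‖ ^ 2)) 0 :=
    (contDiff_const.sub (contDiff_norm_sq ℝ)).contDiffAt.sqrt (by simp)
  exact (hsqrt.smul contDiffAt_const).add (ℝ ∙ v)ᗮ.subtypeL.contDiff.contDiffAt

lemma norm_hemisphereGraph (hv : ‖v‖ = 1) {x : (ℝ ∙ v)ᗮ} (hx : ‖x‖ ≤ 1) :
    ‖hemisphereGraph v x‖ = 1 := by
  have hnonneg : 0 ≤ 1 - ‖x‖ ^ 2 := sub_nonneg.2 (pow_le_one₀ (norm_nonneg x) hx)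
  have hinner : ⟪√(1 - ‖x‖ ^ 2) • v, (x : E)⟫ = 0 := by
    rw [real_inner_smul_left, mem_orthogonal_singleton_iff_inner_right.1 x.2, mul_zero]
  rw [← sq_eq_sq₀ (norm_nonneg _) zero_le_one, one_pow, hemisphereGraph, sq,
    norm_add_sq_eq_norm_sq_add_norm_sq_of_inner_eq_zero _ _ hinner, ← sq, norm_smul, hv,
    Real.norm_eq_abs, mul_one, sq_abs, Real.sq_sqrt hnonneg, norm_coe]
  ring

lemma orthogonalProjectionOnto_hemisphereGraph (x : (ℝ ∙ v)ᗮ) :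
    (ℝ ∙ v)ᗮ.orthogonalProjectionOnto (hemisphereGraph v x) = x := by
  simp [hemisphereGraph, orthogonalProjectionOnto_orthogonalComplement_singleton_eq_zero]

lemma hemisphereGraph_orthogonalProjectionOnto (hv : ‖v‖ = 1) {z : E} (hz : ‖z‖ = 1)
    (hvz : 0 ≤ ⟪v, z⟫) :
    hemisphereGraph v ((ℝ ∙ v)ᗮ.orthogonalProjectionOnto z) = z := by
  have hdecomp : ⟪v, z⟫ • v + (ℝ ∙ v)ᗮ.starProjection z = z := by
    rw [← starProjection_unit_singleton ℝ hv, starProjection_add_starProjection_orthogonal]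
  have hpyth : 1 = ⟪v, z⟫ ^ 2 + ‖(ℝ ∙ v)ᗮ.orthogonalProjectionOnto z‖ ^ 2 := by
    simpa [hz, starProjection_unit_singleton ℝ hv, norm_smul, hv] using
      norm_sq_eq_add_norm_sq_starProjection z (ℝ ∙ v)
  rw [hemisphereGraph, ← eq_sub_of_add_eq hpyth.symm, Real.sqrt_sq hvz]
  exact hdecomp

lemma cast_finrank_orthogonal_span_singleton [FiniteDimensional ℝ E] (hv : v ≠ 0) :
    (finrank ℝ (ℝ ∙ v)ᗮ : ℝ) = finrank ℝ E - 1 := by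
  rw [← finrank_add_finrank_orthogonal (ℝ ∙ v), finrank_span_singleton hv]
  simp

end HemisphereGraph

section SphereMeasure

variable {E : Type*} [NormedAddCommGroup E] [InnerProductSpace ℝ E] [FiniteDimensional ℝ E]
  [MeasurableSpace E] [BorelSpace E]

theorem hausdorffMeasure_sphere_lt_top : μH[(finrank ℝ E : ℝ) - 1] (sphere (0 : E) 1) < ⊤ := by
  refine (isCompact_sphere 0 1).measure_lt_top_of_nhdsWithin fun v hv ↦ ?_
  rw [mem_sphere_zero_iff_norm] at hv
  have hv₀ : v ≠ 0 := norm_ne_zero_iff.1 (by simp [hv])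
  obtain ⟨K, t, ht, hK⟩ := (contDiffAt_hemisphereGraph_zero v).exists_lipschitzOnWith
  let P := (ℝ ∙ v)ᗮ.orthogonalProjectionOnto
  let t' := t ∩ closedBall 0 1
  have hPv : P v = 0 := orthogonalProjectionOnto_orthogonalComplement_singleton_eq_zero v
  have hnhds : P ⁻¹' t' ∩ {z | 0 < ⟪v, z⟫} ∈ 𝓝 v := by
    refine Filter.inter_mem ?_ ?_
    · refine P.continuous.continuousAt.preimage_mem_nhds ?_
      rw [hPv]
      exact Filter.inter_mem ht (closedBall_mem_nhds 0 one_pos)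
    · exact (isOpen_lt continuous_const (by fun_prop)).mem_nhds (by simp [hv])
  refine ⟨_, inter_mem_nhdsWithin _ hnhds, ?_⟩
  have hsub : sphere 0 1 ∩ (P ⁻¹' t' ∩ {z | 0 < ⟪v, z⟫}) ⊆ hemisphereGraph v '' t' :=
    fun z ⟨hz, hzt, hvz⟩ ↦ ⟨P z, hzt, hemisphereGraph_orthogonalProjectionOnto hv
      (mem_sphere_zero_iff_norm.1 hz) (le_of_lt hvz)⟩
  rw [← cast_finrank_orthogonal_span_singleton hv₀]
  calc
    _ ≤ μH[finrank ℝ (ℝ ∙ v)ᗮ] (hemisphereGraph v '' t') := measure_mono hsub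
    _ ≤ K ^ (finrank ℝ (ℝ ∙ v)ᗮ : ℝ) * μH[finrank ℝ (ℝ ∙ v)ᗮ] t' :=
      (hK.mono inter_subset_left).hausdorffMeasure_image_le (Nat.cast_nonneg _)
    _ < ⊤ := ENNReal.mul_lt_top (ENNReal.rpow_lt_top_of_nonneg (Nat.cast_nonneg _) (by simp))
      ((measure_mono inter_subset_right).trans_lt (isCompact_closedBall _ _).measure_lt_top)

theorem hausdorffMeasure_inter_sphere_pos {U : Set E} (hU : IsOpen U)
    (hne : (U ∩ sphere 0 1).Nonempty) :
    0 < μH[(finrank ℝ E : ℝ) - 1] (U ∩ sphere 0 1) := by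
  obtain ⟨v, hvU, hv⟩ := hne
  rw [mem_sphere_zero_iff_norm] at hv
  have hv₀ : v ≠ 0 := norm_ne_zero_iff.1 (by simp [hv])
  let W := hemisphereGraph v ⁻¹' U ∩ ball 0 1
  have hW : IsOpen W := (hU.preimage (continuous_hemisphereGraph v)).inter isOpen_ball
  have hW₀ : (0 : (ℝ ∙ v)ᗮ) ∈ W := ⟨by simpa [hemisphereGraph_zero], mem_ball_self one_pos⟩
  have hsub : W ⊆ (ℝ ∙ v)ᗮ.orthogonalProjectionOnto '' (U ∩ sphere 0 1) := fun x ⟨hxU, hx⟩ ↦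
    ⟨hemisphereGraph v x, ⟨hxU, mem_sphere_zero_iff_norm.2 <|
      norm_hemisphereGraph hv (mem_ball_zero_iff.1 hx).le⟩,
      orthogonalProjectionOnto_hemisphereGraph x⟩
  rw [← cast_finrank_orthogonal_span_singleton hv₀]
  calc
    0 < μH[finrank ℝ (ℝ ∙ v)ᗮ] W := hW.measure_pos _ ⟨0, hW₀⟩
    _ ≤ μH[finrank ℝ (ℝ ∙ v)ᗮ] ((ℝ ∙ v)ᗮ.orthogonalProjectionOnto '' (U ∩ sphere 0 1)) :=
      measure_mono hsub
    _ ≤ μH[finrank ℝ (ℝ ∙ v)ᗮ] (U ∩ sphere 0 1) :=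
      hausdorffMeasure_orthogonalProjectionOnto_le _ _ _ (Nat.cast_nonneg _)

theorem integrableOn_sphere_of_continuous {F : Type*} [NormedAddCommGroup F] {f : E → F}
    (hf : Continuous f) :
    IntegrableOn f (sphere 0 1) μH[(finrank ℝ E : ℝ) - 1] :=
  hf.continuousOn.integrableOn_of_subset_isCompact (isCompact_sphere 0 1)
    isClosed_sphere.measurableSet Subset.rfl hausdorffMeasure_sphere_lt_top.ne

theorem setIntegral_sphere_pos {f : E → ℝ} (hf : Continuous f)
    (hnonneg : ∀ z ∈ sphere 0 1, 0 ≤ f z) {v : E} (hv : v ∈ sphere 0 1) (hfv : f v ≠ 0) :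
    0 < ∫ z in sphere 0 1, f z ∂μH[(finrank ℝ E : ℝ) - 1] := by
  have hae : 0 ≤ᵐ[μH[(finrank ℝ E : ℝ) - 1].restrict (sphere 0 1)] f :=
    ae_restrict_of_forall_mem isClosed_sphere.measurableSet hnonneg
  rw [setIntegral_pos_iff_support_of_nonneg_ae hae (integrableOn_sphere_of_continuous hf)]
  exact hausdorffMeasure_inter_sphere_pos hf.isOpen_support ⟨v, hfv, hv⟩

end SphereMeasure

section IsometryInvariance

variable {E F : Type*} [NormedAddCommGroup E] [NormedSpace ℝ E] [MeasurableSpace E] [BorelSpace E]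
  [NormedAddCommGroup F] (e : E ≃ₗᵢ[ℝ] E) {d r : ℝ}

lemma measurePreserving_restrict_sphere :
    MeasurePreserving e (μH[d].restrict (sphere 0 r)) (μH[d].restrict (sphere 0 r)) := by
  have hpre : e ⁻¹' sphere 0 r = sphere 0 r := by simp
  have he : MeasurePreserving e μH[d] μH[d] :=
    e.toIsometryEquiv.measurePreserving_hausdorffMeasure d
  simpa only [hpre] using he.restrict_preimage (s := sphere 0 r) isClosed_sphere.measurableSet

lemma setIntegral_sphere_add_comp [NormedSpace ℝ F] {f : E → F}
    (hf : IntegrableOn f (sphere 0 r) μH[d]) :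
    ∫ z in sphere 0 r, (f z + f (e z)) ∂μH[d] = (2 : ℝ) • ∫ z in sphere 0 r, f z ∂μH[d] := by
  have he : MeasurePreserving e (μH[d].restrict (sphere 0 r)) (μH[d].restrict (sphere 0 r)) :=
    measurePreserving_restrict_sphere e
  have hemb : MeasurableEmbedding e := e.toHomeomorph.measurableEmbedding
  have hfe : IntegrableOn (fun z ↦ f (e z)) (sphere 0 r) μH[d] :=
    (he.integrable_comp_emb hemb).2 hf
  rw [integral_add hf hfe, he.integral_comp hemb, two_smul]

end IsometryInvariance

lemma max_add_zero_add_max_neg_add_zero (a s : ℝ) :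
    max (a + s) 0 + max (-a + s) 0 = max |a| |s| + s := by
  grind

lemma max_abs_sub_mul_sq_sub_nonneg (a b c : ℝ) :
    0 ≤ (max |a| c - max |b| c) * (a ^ 2 - b ^ 2) := by
  rcases le_total |a| |b| with hab | hba
  · exact mul_nonneg_of_nonpos_of_nonpos (sub_nonpos.2 (max_le_max_right c hab))
      (sub_nonpos.2 (sq_le_sq.2 hab))
  · exact mul_nonneg (sub_nonneg.2 (max_le_max_right c hba)) (sub_nonneg.2 (sq_le_sq.2 hba))

lemma max_abs_sub_mul_sq_sub_pos {a b c : ℝ} (hca : c < |a|) (hba : |b| < |a|) :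
    0 < (max |a| c - max |b| c) * (a ^ 2 - b ^ 2) := by
  rw [max_eq_left hca.le]
  exact mul_pos (sub_pos.2 (max_lt hba hca)) (sub_pos.2 (sq_lt_sq.2 hba))

section SphericalCap

variable {E : Type*} [NormedAddCommGroup E] [InnerProductSpace ℝ E] {u v : E} {s : ℝ}

/-- The part of the unit sphere at height greater than `-s` in the direction `v`. The sign of `s` is
that of the paper, so that the weight `⟪v, z⟫ + s` vanishes on the rim. -/
def sphericalCap (v : E) (s : ℝ) : Set E :=
  {z | ‖z‖ = 1 ∧ -s < ⟪v, z⟫}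

lemma sphericalCap_eq_empty (hv : ‖v‖ = 1) (hs : s ≤ -1) :
    sphericalCap v s = ∅ := by
  refine eq_empty_of_forall_notMem fun z ⟨hz, hsz⟩ ↦ ?_
  have : ⟪v, z⟫ ≤ 1 := by simpa [hv, hz] using real_inner_le_norm v z
  linarith

variable [MeasurableSpace E] [BorelSpace E]

lemma setIntegral_sphericalCap_eq_setIntegral_sphere (μ : Measure E) (g : E → ℝ) :
    ∫ z in sphericalCap v s, (⟪v, z⟫ + s) * g z ∂μ =
      ∫ z in sphere 0 1, max (⟪v, z⟫ + s) 0 * g z ∂μ := by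
  have hcap : sphericalCap v s = sphere 0 1 ∩ {z | -s < ⟪v, z⟫} := by
    ext z
    simp [sphericalCap]
  have hmeas : MeasurableSet {z : E | -s < ⟪v, z⟫} :=
    (isOpen_lt continuous_const (by fun_prop)).measurableSet
  rw [hcap, ← setIntegral_indicator hmeas]
  congr 1 with z
  by_cases hz : -s < ⟪v, z⟫
  · rw [indicator_of_mem (mem_ofPred_eq ▸ hz), max_eq_left (by linarith)]
  · rw [indicator_of_notMem (mem_ofPred_eq ▸ hz), max_eq_right (by linarith), zero_mul]

variable [FiniteDimensional ℝ E]

theorem four_mul_setIntegral_sphere_eq_symmetrized {f : ℝ → ℝ} (hf : Continuous f)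
    (huv : ‖u‖ = ‖v‖) :
    4 * ∫ z in sphere 0 1, f ⟪v, z⟫ * (⟪v, z⟫ ^ 2 - ⟪u, z⟫ ^ 2) ∂μH[(finrank ℝ E : ℝ) - 1] =
      ∫ z in sphere 0 1, (f ⟪v, z⟫ + f (-⟪v, z⟫) - (f ⟪u, z⟫ + f (-⟪u, z⟫))) *
        (⟪v, z⟫ ^ 2 - ⟪u, z⟫ ^ 2) ∂μH[(finrank ℝ E : ℝ) - 1] := by
  let R := (ℝ ∙ (u - v))ᗮ.reflection
  have hRu : R u = v := reflection_sub huv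
  have hRv : R v = u := by rw [← hRu, reflection_reflection]
  have hinner_u (z : E) : ⟪u, R z⟫ = ⟪v, z⟫ := by rw [← hRv, R.inner_map_map]
  have hinner_v (z : E) : ⟪v, R z⟫ = ⟪u, z⟫ := by rw [← hRu, R.inner_map_map]
  let G : E → ℝ := fun z ↦ f ⟪v, z⟫ * (⟪v, z⟫ ^ 2 - ⟪u, z⟫ ^ 2)
  let H : E → ℝ := fun z ↦ (f ⟪v, z⟫ + f (-⟪v, z⟫)) * (⟪v, z⟫ ^ 2 - ⟪u, z⟫ ^ 2)
  have hG : IntegrableOn G (sphere 0 1) μH[(finrank ℝ E : ℝ) - 1] :=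
    integrableOn_sphere_of_continuous (by fun_prop)
  have hH : IntegrableOn H (sphere 0 1) μH[(finrank ℝ E : ℝ) - 1] :=
    integrableOn_sphere_of_continuous (by fun_prop)
  have hGH (z : E) : H z = G z + G (LinearIsometryEquiv.neg ℝ z) := by
    simp only [G, H, LinearIsometryEquiv.coe_neg, inner_neg_right]
    ring
  have hHR (z : E) : (f ⟪v, z⟫ + f (-⟪v, z⟫) - (f ⟪u, z⟫ + f (-⟪u, z⟫))) *
      (⟪v, z⟫ ^ 2 - ⟪u, z⟫ ^ 2) = H z + H (R z) := by
    simp only [H, hinner_u, hinner_v]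
    ring
  simp_rw [hHR]
  rw [setIntegral_sphere_add_comp R hH]
  simp_rw [hGH]
  rw [setIntegral_sphere_add_comp _ hG, smul_smul, smul_eq_mul]
  norm_num [G]

theorem four_mul_setIntegral_sphericalCap (huv : ‖u‖ = ‖v‖) :
    4 * ∫ z in sphericalCap v s, (⟪v, z⟫ + s) * (⟪v, z⟫ ^ 2 - ⟪u, z⟫ ^ 2)
        ∂μH[(finrank ℝ E : ℝ) - 1] =
      ∫ z in sphere 0 1, (max |⟪v, z⟫| |s| - max |⟪u, z⟫| |s|) * (⟪v, z⟫ ^ 2 - ⟪u, z⟫ ^ 2)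
        ∂μH[(finrank ℝ E : ℝ) - 1] := by
  rw [setIntegral_sphericalCap_eq_setIntegral_sphere,
    four_mul_setIntegral_sphere_eq_symmetrized (f := fun t ↦ max (t + s) 0) (by fun_prop) huv]
  simp only [max_add_zero_add_max_neg_add_zero, add_sub_add_right_eq_sub]

theorem setIntegral_sphericalCap_pos (hu : ‖u‖ = 1) (hv : ‖v‖ = 1) (huv : |⟪u, v⟫| < 1)
    (hs : |s| < 1) :
    0 < ∫ z in sphericalCap v s, (⟪v, z⟫ + s) * (⟪v, z⟫ ^ 2 - ⟪u, z⟫ ^ 2)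
      ∂μH[(finrank ℝ E : ℝ) - 1] := by
  have hvv : |⟪v, v⟫| = 1 := by simp [hv]
  rw [← mul_pos_iff_of_pos_left four_pos, four_mul_setIntegral_sphericalCap (hu.trans hv.symm)]
  exact setIntegral_sphere_pos (by fun_prop)
    (fun z _ ↦ max_abs_sub_mul_sq_sub_nonneg _ _ _) (mem_sphere_zero_iff_norm.2 hv)
    (max_abs_sub_mul_sq_sub_pos (hs.trans_eq hvv.symm) (huv.trans_eq hvv.symm)).ne'

theorem setIntegral_sphericalCap_eq_zero (hu : ‖u‖ = 1) (hv : ‖v‖ = 1) (hs : 1 ≤ |s|) :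
    ∫ z in sphericalCap v s, (⟪v, z⟫ + s) * (⟪v, z⟫ ^ 2 - ⟪u, z⟫ ^ 2)
      ∂μH[(finrank ℝ E : ℝ) - 1] = 0 := by
  have hle {w z : E} (hw : ‖w‖ = 1) (hz : z ∈ sphere 0 1) : |⟪w, z⟫| ≤ |s| :=
    (abs_real_inner_le_norm w z).trans (by simpa [hw, mem_sphere_zero_iff_norm.1 hz] using hs)
  refine (mul_eq_zero_iff_left four_ne_zero).1 ?_
  rw [four_mul_setIntegral_sphericalCap (hu.trans hv.symm)]
  refine setIntegral_eq_zero_of_forall_eq_zero fun z hz ↦ ?_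
  rw [max_eq_right (hle hv hz), max_eq_right (hle hu hz), sub_self, zero_mul]

theorem spherical_cap_integral_general (hu : ‖u‖ = 1) (hv : ‖v‖ = 1) (huv : |⟪u, v⟫| < 1)
    (s : ℝ) :
    (s ∈ Ioo (-1 : ℝ) 1 →
      0 < ∫ z in sphericalCap v s, (⟪v, z⟫ + s) * (⟪v, z⟫ ^ 2 - ⟪u, z⟫ ^ 2)
        ∂μH[(finrank ℝ E : ℝ) - 1]) ∧
    (1 ≤ s →
      ∫ z in sphericalCap v s, (⟪v, z⟫ + s) * (⟪v, z⟫ ^ 2 - ⟪u, z⟫ ^ 2)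
        ∂μH[(finrank ℝ E : ℝ) - 1] = 0) ∧
    (s ≤ -1 → sphericalCap v s = ∅) :=
  ⟨fun hs ↦ setIntegral_sphericalCap_pos hu hv huv (abs_lt.2 hs),
    fun hs ↦ setIntegral_sphericalCap_eq_zero hu hv (hs.trans (le_abs_self s)),
    sphericalCap_eq_empty hv⟩

end SphericalCap

theorem spherical_cap_integral (n : ℕ) (hn : 2 ≤ n) (s : ℝ) :
    (s ∈ Set.Ioo (-1 : ℝ) 1 →
      0 < ∫ z in {z : EuclideanSpace ℝ (Fin n) | ‖z‖ = 1 ∧ -s < z ⟨n - 1, by omega⟩},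
        (z ⟨n - 1, by omega⟩ + s) * ((z ⟨n - 1, by omega⟩) ^ 2 - (z ⟨0, by omega⟩) ^ 2)
          ∂(μH[(n : ℝ) - 1])) ∧
    (1 ≤ s →
      (∫ z in {z : EuclideanSpace ℝ (Fin n) | ‖z‖ = 1 ∧ -s < z ⟨n - 1, by omega⟩},
        (z ⟨n - 1, by omega⟩ + s) * ((z ⟨n - 1, by omega⟩) ^ 2 - (z ⟨0, by omega⟩) ^ 2)
          ∂(μH[(n : ℝ) - 1])) = 0) ∧
    (s ≤ -1 →
      {z : EuclideanSpace ℝ (Fin n) | ‖z‖ = 1 ∧ -s < z ⟨n - 1, by omega⟩} = ∅) := by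
  have hne : (⟨n - 1, by omega⟩ : Fin n) ≠ ⟨0, by omega⟩ := by grind
  simpa [sphericalCap, EuclideanSpace.inner_single_left, hne] using spherical_cap_integral_general
    (u := EuclideanSpace.single (⟨0, by omega⟩ : Fin n) (1 : ℝ))
    (v := EuclideanSpace.single ⟨n - 1, by omega⟩ 1) (by simp) (by simp)
    (by simp [EuclideanSpace.inner_single_left, hne]) s
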